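/- Let B be a ring satisfying: B is left noetherian and semi-graded (C1); B_0 is left noetherian (C2); each B_n is a finitely generated left B_0-module (C3); and B_0 ⊆ Z(B) (C4). Then the collection stor-B of torsion modules forms a Serre subcategory of the abelian category sgr-B; that is, stor-B is a full subcategory and for every short exact sequence 0 → M' → M → M'' → 0 in sgr-B, M is torsion if and only if both M' and M'' are torsion. Consequently the quotient category qsgr-B := sgr-B / stor-B is abelian. -/

import Mathlib

open scoped DirectSum
open CategoryTheory

/-- A ring `B` is *semi-graded (SG)*. -/
structure SemiGraded (B : Type) [Ring B] where
  comp : ℕ → AddSubgroup B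
  internal : DirectSum.IsInternal comp
  mul_mem : ∀ m n : ℕ, ∀ a ∈ comp m, ∀ b ∈ comp n, a * b ∈ ⨆ k ∈ Set.Iic (m + n), comp k
  one_mem' : 1 ∈ comp 0

/-- A two-sided ideal viewed as an additive subgroup. -/
def TwoSidedIdeal.addSubgroup {B : Type} [Ring B] (I : TwoSidedIdeal B) : AddSubgroup B where
  carrier := {x | x ∈ I}
  zero_mem' := I.zero_mem
  add_mem' := I.add_mem
  neg_mem' := I.neg_mem

variable (B : Type) [Ring B] (SG : SemiGraded B)

/-- `B_{≥s}`: the least two-sided ideal of `B` containing `⊕_{p≥s} B_p` which is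
semi-graded as a left ideal and a direct summand of `B`. -/
def SemiGraded.Bge (s : ℕ) : TwoSidedIdeal B :=
  sInf {I : TwoSidedIdeal B |
    (⨆ p ∈ Set.Ici s, SG.comp p) ≤ I.addSubgroup ∧
    I.addSubgroup = (⨆ n : ℕ, (I.addSubgroup ⊓ SG.comp n)) ∧
    ∃ J : AddSubgroup B, I.addSubgroup ⊓ J = ⊥ ∧ I.addSubgroup ⊔ J = ⊤}

/-- An element `x` of a `B`-module `M` is *torsion* if `(B_{≥s})^n x = 0` for some
`s, n ≥ 0`. -/
def SemiGraded.IsTorsionElem {M : Type} [AddCommGroup M] [Module B M] (x : M) : Prop :=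
  ∃ s nn : ℕ, ∀ c : Fin nn → B, (∀ j, c j ∈ SG.Bge B s) → (List.ofFn c).prod • x = 0

/-- An object of the category `sgr-B`. -/
structure SgrObj where
  carrier : Type
  [acg : AddCommGroup carrier]
  [mod : Module B carrier]
  comp : ℤ → AddSubgroup carrier
  internal : DirectSum.IsInternal comp
  smul_mem : ∀ (m : ℕ) (n : ℤ), ∀ b ∈ SG.comp m, ∀ v ∈ comp n,
    b • v ∈ ⨆ k ∈ Set.Iic ((m : ℤ) + n), comp k
  fg : Module.Finite B carrier

attribute [instance] SgrObj.acg SgrObj.mod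

/-- The category `sgr-B` of finitely generated semi-graded left `B`-modules with
homogeneous `B`-homomorphisms. -/
instance sgrCategory : Category (SgrObj B SG) where
  Hom M N := {f : M.carrier →ₗ[B] N.carrier // ∀ n : ℤ, ∀ x ∈ M.comp n, f x ∈ N.comp n}
  id M := ⟨LinearMap.id, fun n x hx => hx⟩
  comp f g := ⟨g.1.comp f.1, fun n x hx => g.2 n _ (f.2 n x hx)⟩

/-- A torsion object of `sgr-B`: all its elements are torsion. -/
def SgrObj.IsTorsion (M : SgrObj B SG) : Prop :=
  ∀ x : M.carrier, SG.IsTorsionElem B x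

/-- The morphisms of `sgr-B` with torsion kernel and torsion cokernel; the quotient
category `qsgr-B = sgr-B / stor-B` is the localization at this class. -/
def torsionW : MorphismProperty (SgrObj B SG) := fun M N f =>
  (∀ x : M.carrier, f.1 x = 0 → SG.IsTorsionElem B x) ∧
  (∀ y : N.carrier, ∃ s nn : ℕ, ∀ c : Fin nn → B, (∀ j, c j ∈ SG.Bge B s) →
    (List.ofFn c).prod • y ∈ LinearMap.range f.1)

/-!
Kernels and ranges of homogeneous homomorphisms are homogeneous, so they carry semi-gradings; over
a left noetherian ring they are finitely generated, and kernels and cokernels in `sgr-B` are those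
of the underlying modules. Hence `sgr-B` is abelian.

The ideals `B_{≥s}` decrease with `s`, so the elements moved into a submodule `K` by a power of some
`B_{≥s}` form a submodule, the *saturation* of `K`, and `M` is torsion iff the saturation of `0` is
`M`. Saturation is monotone and commutes with preimages. In a short exact sequence
`0 → M' → M → M'' → 0`, `M''` is torsion iff the saturation of `M'` in `M` is `M`, and `M'` is
torsion iff it lies in the saturation of `0`; as `M'` is finitely generated, its saturation then
equals that of `0`.

Thus `stor-B` is a Serre class. Since the morphisms inverted in `qsgr-B` are those whose kernel and
cokernel lie in `stor-B`, the localization theorem for Serre classes shows that `qsgr-B` is abelian.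
-/

section Decomposition

open DirectSum

theorem biSup_prod_biSup_le {ι A A' : Type*} [AddGroup A] [AddGroup A'] (S : ι → AddSubgroup A)
    (S' : ι → AddSubgroup A') (T : Set ι) :
    (⨆ i ∈ T, S i).prod (⨆ i ∈ T, S' i) ≤ ⨆ i ∈ T, (S i).prod (S' i) := by
  refine AddSubgroup.prod_le_iff.2 ⟨?_, ?_⟩
  all_goals simp only [AddSubgroup.map_iSup]
  · exact iSup₂_mono fun i _ => (AddSubgroup.prod_le_iff.1 le_rfl).1
  · exact iSup₂_mono fun i _ => (AddSubgroup.prod_le_iff.1 le_rfl).2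

variable {ι A A' : Type*} [DecidableEq ι] [AddCommGroup A] [AddCommGroup A']

theorem isInternal_of_projections {S : ι → AddSubgroup A} (hS : ⨆ i, S i = ⊤) (p : ι → A →+ A')
    (hp : ∀ i, ∀ x ∈ S i, p i x = 0 → x = 0) (hp' : ∀ i j, i ≠ j → ∀ x ∈ S i, p j x = 0) :
    IsInternal S := by
  have projection_coe (i : ι) (z : ⨁ i, S i) : p i (DirectSum.coeAddMonoidHom S z) = p i (z i) := by
    induction z using DirectSum.induction_on with
    | zero => simp
    | of j x =>
      rw [coeAddMonoidHom_of]
      obtain rfl | hij := eq_or_ne j i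
      · rw [of_eq_same]
      · rw [hp' j i hij x x.2, of_eq_of_ne _ _ _ hij.symm, ZeroMemClass.coe_zero, map_zero]
    | add y z hy hz => simp only [map_add, hy, hz, DirectSum.add_apply, AddMemClass.coe_add]
  constructor
  · refine (injective_iff_map_eq_zero _).2 fun z hz => DFinsupp.ext fun i => Subtype.ext ?_
    exact hp i _ (z i).2 (by rw [← projection_coe, hz, map_zero])
  · rw [← AddMonoidHom.range_eq_top, eq_top_iff, ← hS, iSup_le_iff]
    exact fun i x hx => ⟨of (fun i => S i) i ⟨x, hx⟩, coeAddMonoidHom_of _ _ _⟩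

variable (𝒜 : ι → AddSubgroup A) [Decomposition 𝒜]

/-- The projection of a decomposed group `A` onto its `i`-th component, as an endomorphism
of `A`. -/
def decomposeProj (i : ι) : A →+ A :=
  (𝒜 i).subtype.comp ((DFinsupp.evalAddMonoidHom i).comp (decomposeAddEquiv 𝒜).toAddMonoidHom)

theorem decompose_eq_zero_of_mem_biSup {T : Set ι} {x : A} (hx : x ∈ ⨆ i ∈ T, 𝒜 i) {j : ι}
    (hj : j ∉ T) : (decompose 𝒜 x j : A) = 0 := by
  have hle : ⨆ i ∈ T, 𝒜 i ≤ (decomposeProj 𝒜 j).ker := iSup₂_le fun i hi y hy =>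
    decompose_of_mem_ne 𝒜 hy (ne_of_mem_of_not_mem hi hj)
  exact hle hx

theorem iSup_eq_top_of_decomposition : ⨆ i, 𝒜 i = ⊤ := by
  refine eq_top_iff.2 fun x _ => ?_
  induction x using Decomposition.inductionOn 𝒜 with
  | zero => exact zero_mem _
  | homogeneous x => exact AddSubgroup.mem_iSup_of_mem _ x.2
  | add x y hx hy => exact add_mem (hx trivial) (hy trivial)

variable {𝒜}

theorem comap_biSup_le_of_isHomogeneous {f : A' →+ A} (hf : Function.Injective f)
    (hrange : SetLike.IsHomogeneous 𝒜 f.range) (T : Set ι) :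
    (⨆ i ∈ T, 𝒜 i).comap f ≤ ⨆ i ∈ T, (𝒜 i).comap f := by
  classical
  intro x hx
  choose y hy using fun i => hrange i ⟨x, rfl⟩
  have hsum : ∑ i ∈ (decompose 𝒜 (f x)).support, y i = x := hf <| by
    simp only [map_sum, hy, sum_support_decompose]
  rw [← hsum]
  refine sum_mem fun i hi => ?_
  have hiT : i ∈ T := by
    by_contra hiT
    exact DFinsupp.mem_support_iff.1 hi (Subtype.ext (decompose_eq_zero_of_mem_biSup 𝒜 hx hiT))
  refine AddSubgroup.mem_iSup_of_mem i (AddSubgroup.mem_iSup_of_mem hiT ?_)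
  exact AddSubgroup.mem_comap.2 ((hy i).symm ▸ SetLike.coe_mem _)

theorem isInternal_comap {f : A' →+ A} (hf : Function.Injective f)
    (hrange : SetLike.IsHomogeneous 𝒜 f.range) : IsInternal fun i => (𝒜 i).comap f := by
  refine isInternal_of_projections (eq_top_iff.2 fun x _ => ?_)
    (fun i => (decomposeProj 𝒜 i).comp f) (fun i x hx h => ?_)
    fun i j hij x hx => decompose_of_mem_ne 𝒜 hx hij
  · have hx : x ∈ (⨆ i ∈ Set.univ, 𝒜 i).comap f := by
      simp only [Set.mem_univ, iSup_pos, iSup_eq_top_of_decomposition, AddSubgroup.comap_top,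
        AddSubgroup.mem_top]
    simpa only [Set.mem_univ, iSup_pos] using comap_biSup_le_of_isHomogeneous hf hrange _ hx
  · exact (map_eq_zero_iff f hf).1 ((decompose_of_mem_same 𝒜 hx).symm.trans h)

theorem isInternal_map {f : A →+ A'} (hf : Function.Surjective f)
    (hker : SetLike.IsHomogeneous 𝒜 f.ker) : IsInternal fun i => (𝒜 i).map f := by
  let p (i : ι) : A' →+ A' :=
    f.liftOfSurjective hf ⟨f.comp (decomposeProj 𝒜 i), fun _ hx => hker i hx⟩
  have hp (i : ι) (x : A) : p i (f x) = f (decompose 𝒜 x i) :=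
    f.liftOfRightInverse_comp_apply _ _ _ x
  refine isInternal_of_projections ?_ p ?_ ?_
  · rw [← AddSubgroup.map_iSup, iSup_eq_top_of_decomposition, ← AddMonoidHom.range_eq_map,
      AddMonoidHom.range_eq_top.2 hf]
  · rintro i _ ⟨x, hx, rfl⟩ h
    rwa [hp, decompose_of_mem_same 𝒜 hx] at h
  · rintro i j hij _ ⟨x, hx, rfl⟩
    rw [hp, decompose_of_mem_ne 𝒜 hx hij, map_zero]

theorem isInternal_prod (𝒜' : ι → AddSubgroup A') [Decomposition 𝒜'] :
    IsInternal fun i => (𝒜 i).prod (𝒜' i) := by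
  refine isInternal_of_projections (eq_top_iff.2 ?_)
    (fun i => (decomposeProj 𝒜 i).prodMap (decomposeProj 𝒜' i)) (fun i x hx h => ?_)
    fun i j hij x hx =>
      Prod.ext (decompose_of_mem_ne 𝒜 hx.1 hij) (decompose_of_mem_ne 𝒜' hx.2 hij)
  · simpa only [Set.mem_univ, iSup_pos, iSup_eq_top_of_decomposition, AddSubgroup.top_prod_top]
      using biSup_prod_biSup_le 𝒜 𝒜' Set.univ
  · exact Prod.ext ((decompose_of_mem_same 𝒜 hx.1).symm.trans (congrArg Prod.fst h))
      ((decompose_of_mem_same 𝒜' hx.2).symm.trans (congrArg Prod.snd h))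

end Decomposition

section Saturation

variable {R M N P : Type*} [Ring R] [AddCommGroup M] [Module R M] [AddCommGroup N] [Module R N]
  [AddCommGroup P] [Module R P]

/-- The residual submodule `(K :_M J)` of the elements of `M` which the two-sided ideal `J`
multiplies into `K`. -/
def idealResidual (J : TwoSidedIdeal R) (K : Submodule R M) : Submodule R M where
  carrier := {x | ∀ a ∈ J, a • x ∈ K}
  zero_mem' a _ := by simp only [smul_zero, zero_mem]
  add_mem' hx hy a ha := by simpa only [smul_add] using add_mem (hx a ha) (hy a ha)
  smul_mem' r x hx a ha := by
    simpa only [mul_smul] using hx (a * r) (J.mul_mem_right a r ha)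

theorem idealResidual_mono (J : TwoSidedIdeal R) :
    Monotone (idealResidual J : Submodule R M → Submodule R M) :=
  fun _ _ h _ hx a ha => h (hx a ha)

theorem idealResidual_anti {I J : TwoSidedIdeal R} (h : I ≤ J) :
    (idealResidual J : Submodule R M → Submodule R M) ≤ idealResidual I :=
  fun _ _ hx a ha => hx a (h ha)

theorem id_le_idealResidual (J : TwoSidedIdeal R) :
    (id : Submodule R M → Submodule R M) ≤ idealResidual J :=
  fun K _ hx a _ => K.smul_mem a hx

theorem iterate_idealResidual_le {I J : TwoSidedIdeal R} (h : I ≤ J) {m n : ℕ} (hmn : m ≤ n)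
    (K : Submodule R M) : (idealResidual J)^[m] K ≤ (idealResidual I)^[n] K :=
  ((idealResidual_mono J).iterate_le_of_le (idealResidual_anti h) m K).trans
    (Function.monotone_iterate_of_id_le (id_le_idealResidual I) hmn K)

theorem mem_iterate_idealResidual {J : TwoSidedIdeal R} {n : ℕ} {K : Submodule R M} {x : M} :
    x ∈ (idealResidual J)^[n] K ↔
      ∀ c : Fin n → R, (∀ j, c j ∈ J) → (List.ofFn c).prod • x ∈ K := by
  induction n generalizing K with
  | zero => simp
  | succ n ih =>
    have hcons : (∀ c : Fin (n + 1) → R, (∀ j, c j ∈ J) → (List.ofFn c).prod • x ∈ K) ↔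
        ∀ a ∈ J, ∀ c : Fin n → R, (∀ j, c j ∈ J) → a • (List.ofFn c).prod • x ∈ K := by
      simp only [Fin.forall_fin_succ_pi, Fin.forall_fin_succ, Fin.cons_zero, Fin.cons_succ,
        List.ofFn_cons, List.prod_cons, mul_smul, and_imp]
      exact forall_congr' fun a => forall_comm
    rw [Function.iterate_succ_apply, ih, hcons]
    exact ⟨fun h a ha c hc => h c hc a ha, fun h c hc a ha => h a ha c hc⟩

variable {ι : Type*} (I : ι → TwoSidedIdeal R)

/-- The saturation of a submodule `K` with respect to a family of two-sided ideals `I s`: the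
elements which some power of some `I s` multiplies into `K`. It is a union, rather than a mere
sum, as soon as the family is decreasing. The saturation of `⊥` is the torsion submodule. -/
def saturation (K : Submodule R M) : Submodule R M :=
  ⨆ p : ι × ℕ, (idealResidual (I p.1))^[p.2] K

theorem iterate_idealResidual_le_saturation (s : ι) (n : ℕ) (K : Submodule R M) :
    (idealResidual (I s))^[n] K ≤ saturation I K :=
  le_iSup (fun p : ι × ℕ => (idealResidual (I p.1))^[p.2] K) (s, n)

theorem saturation_mono : Monotone (saturation I : Submodule R M → Submodule R M) :=
  fun _ _ h => iSup_mono fun p => (idealResidual_mono (I p.1)).iterate p.2 h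

variable {I} [SemilatticeSup ι] (hI : Antitone I)
include hI

theorem directed_iterate_idealResidual (K : Submodule R M) :
    Directed (· ≤ ·) fun p : ι × ℕ => (idealResidual (I p.1))^[p.2] K :=
  Monotone.directed_le fun (_, _) (_, _) h => iterate_idealResidual_le (hI h.1) h.2 K

variable [Nonempty ι]

theorem mem_saturation {K : Submodule R M} {x : M} :
    x ∈ saturation I K ↔
      ∃ s n, ∀ c : Fin n → R, (∀ j, c j ∈ I s) → (List.ofFn c).prod • x ∈ K := by
  simp only [saturation, Submodule.mem_iSup_of_directed _ (directed_iterate_idealResidual hI K),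
    Prod.exists, mem_iterate_idealResidual]

theorem saturation_comap (f : M →ₗ[R] N) (K : Submodule R N) :
    saturation I (K.comap f) = (saturation I K).comap f := by
  ext x
  simp only [mem_saturation hI, Submodule.mem_comap, map_smul]

theorem saturation_le_saturation_of_fg {K L : Submodule R M} (hK : K.FG)
    (hKL : K ≤ saturation I L) : saturation I K ≤ saturation I L := by
  -- A finitely generated `K` is moved into `L` by one power of one of the ideals.
  obtain ⟨_, ⟨⟨t, m⟩, rfl⟩, hKtm⟩ :=
    (CompleteLattice.isCompactElement_iff_le_of_directed_sSup_le _ K).1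
      (K.fg_iff_compact.1 hK) _ (Set.range_nonempty _)
      (directed_iterate_idealResidual hI L).directedOn_range hKL
  refine iSup_le fun ⟨s, n⟩ => ?_
  calc (idealResidual (I s))^[n] K
      ≤ (idealResidual (I (s ⊔ t)))^[n] K := iterate_idealResidual_le (hI le_sup_left) le_rfl K
    _ ≤ (idealResidual (I (s ⊔ t)))^[n] ((idealResidual (I (s ⊔ t)))^[m] L) :=
        (idealResidual_mono _).iterate n
          (hKtm.trans (iterate_idealResidual_le (hI le_sup_right) le_rfl L))
    _ = (idealResidual (I (s ⊔ t)))^[n + m] L := (Function.iterate_add_apply _ n m L).symm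
    _ ≤ saturation I L := iterate_idealResidual_le_saturation I _ _ L

theorem saturation_bot_eq_top_iff_of_injective {f : M →ₗ[R] N} (hf : Function.Injective f) :
    saturation I (⊥ : Submodule R M) = ⊤ ↔ LinearMap.range f ≤ saturation I ⊥ := by
  rw [← LinearMap.ker_eq_bot.2 hf, LinearMap.ker, saturation_comap hI, eq_top_iff,
    ← Submodule.map_le_iff_le_comap, Submodule.map_top]

theorem saturation_bot_eq_top_iff_of_surjective {g : N →ₗ[R] P} (hg : Function.Surjective g) :
    saturation I (⊥ : Submodule R P) = ⊤ ↔ saturation I (LinearMap.ker g) = ⊤ := by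
  rw [LinearMap.ker, saturation_comap hI, ← Submodule.comap_top g,
    (Submodule.comap_injective_of_surjective hg).eq_iff]

theorem saturation_bot_eq_top_iff_of_exact [Module.Finite R M] {f : M →ₗ[R] N} {g : N →ₗ[R] P}
    (hf : Function.Injective f) (hg : Function.Surjective g)
    (hfg : LinearMap.range f = LinearMap.ker g) :
    saturation I (⊥ : Submodule R N) = ⊤ ↔
      saturation I (⊥ : Submodule R M) = ⊤ ∧ saturation I (⊥ : Submodule R P) = ⊤ := by
  rw [saturation_bot_eq_top_iff_of_injective hI hf, saturation_bot_eq_top_iff_of_surjective hI hg,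
    ← hfg]
  refine ⟨fun h => ⟨h ▸ le_top, top_le_iff.1 (h ▸ saturation_mono I bot_le)⟩, fun ⟨h, h'⟩ => ?_⟩
  exact top_le_iff.1 (h' ▸ saturation_le_saturation_of_fg hI Submodule.FG.of_finite h)

end Saturation

section Torsion

variable {B SG}

theorem SemiGraded.Bge_antitone : Antitone (SG.Bge B) := fun _ _ h =>
  sInf_le_sInf fun _ hI => ⟨(biSup_mono fun _ hp => h.trans hp).trans hI.1, hI.2⟩

variable (SG) in
/-- The torsion submodule `T(M)`. -/
def SemiGraded.torsion (M : Type) [AddCommGroup M] [Module B M] : Submodule B M :=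
  saturation (SG.Bge B) ⊥

theorem SemiGraded.mem_torsion {M : Type} [AddCommGroup M] [Module B M] {x : M} :
    x ∈ SG.torsion M ↔ SG.IsTorsionElem B x :=
  mem_saturation SemiGraded.Bge_antitone

theorem SgrObj.isTorsion_iff {M : SgrObj B SG} : M.IsTorsion ↔ SG.torsion M.carrier = ⊤ := by
  simp only [SgrObj.IsTorsion, ← SemiGraded.mem_torsion, Submodule.eq_top_iff']

theorem torsionW_iff {M N : SgrObj B SG} {f : M ⟶ N} :
    torsionW B SG f ↔ LinearMap.ker f.1 ≤ SG.torsion M.carrier ∧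
      saturation (SG.Bge B) (LinearMap.range f.1) = ⊤ := by
  simp only [Submodule.eq_top_iff', mem_saturation SemiGraded.Bge_antitone, SetLike.le_def,
    LinearMap.mem_ker, SemiGraded.mem_torsion, torsionW]

end Torsion

namespace SgrObj

open DirectSum Limits

variable {B SG}

attribute [instance] SgrObj.fg

noncomputable instance (M : SgrObj B SG) : Decomposition M.comp :=
  M.internal.chooseDecomposition

section Hom

variable {M N P : SgrObj B SG}

theorem hom_ext {f g : M ⟶ N} (h : ∀ x, f.1 x = g.1 x) : f = g :=
  Subtype.ext (LinearMap.ext h)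

theorem decompose_map (f : M ⟶ N) (x : M.carrier) (n : ℤ) :
    (decompose N.comp (f.1 x) n : N.carrier) = f.1 (decompose M.comp x n) := by
  induction x using Decomposition.inductionOn M.comp with
  | zero => simp
  | @homogeneous k x =>
    have hfx : f.1 x ∈ N.comp k := f.2 k x x.2
    obtain rfl | hkn := eq_or_ne k n
    · rw [decompose_of_mem_same _ hfx, decompose_of_mem_same _ x.2]
    · rw [decompose_of_mem_ne _ hfx hkn, decompose_of_mem_ne _ x.2 hkn, map_zero]
  | add x y hx hy =>
    simp only [map_add, decompose_add, DirectSum.add_apply, AddMemClass.coe_add, hx, hy]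

theorem isHomogeneous_ker (f : M ⟶ N) : (LinearMap.ker f.1).IsHomogeneous M.comp := by
  intro n x hx
  rw [LinearMap.mem_ker] at hx ⊢
  rw [← decompose_map, hx, decompose_zero, DirectSum.zero_apply, ZeroMemClass.coe_zero]

theorem isHomogeneous_range (f : M ⟶ N) : (LinearMap.range f.1).IsHomogeneous N.comp := by
  rintro n _ ⟨x, rfl⟩
  exact ⟨decompose M.comp x n, (decompose_map f x n).symm⟩

theorem mem_comp_of_map_mem {f : M ⟶ N} (hf : Function.Injective f.1) {n : ℤ} {x : M.carrier}
    (hx : f.1 x ∈ N.comp n) : x ∈ M.comp n := by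
  have hxn : (decompose M.comp x n : M.carrier) = x :=
    hf (by rw [← decompose_map, decompose_of_mem_same _ hx])
  exact hxn ▸ SetLike.coe_mem _

theorem exists_mem_comp_map_eq {f : M ⟶ N} (hf : Function.Surjective f.1) {n : ℤ}
    {y : N.carrier} (hy : y ∈ N.comp n) : ∃ x ∈ M.comp n, f.1 x = y := by
  obtain ⟨x, rfl⟩ := hf y
  exact ⟨decompose M.comp x n, SetLike.coe_mem _,
    by rw [← decompose_map, decompose_of_mem_same _ hy]⟩

variable (M N) in
/-- The additive group of homogeneous homomorphisms. -/
def homAddSubgroup : AddSubgroup (M.carrier →ₗ[B] N.carrier) where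
  carrier := {f | ∀ n : ℤ, ∀ x ∈ M.comp n, f x ∈ N.comp n}
  zero_mem' _ _ _ := zero_mem _
  add_mem' hf hg n x hx := add_mem (hf n x hx) (hg n x hx)
  neg_mem' hf n x hx := neg_mem (hf n x hx)

instance : AddCommGroup (M ⟶ N) := inferInstanceAs (AddCommGroup (homAddSubgroup M N))

instance : Preadditive (SgrObj B SG) where
  add_comp _ _ _ f f' g := hom_ext fun x => map_add g.1 (f.1 x) (f'.1 x)
  comp_add _ _ _ _ _ _ := rfl

theorem comp_eq_zero_iff {f : M ⟶ N} {g : N ⟶ P} :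
    f ≫ g = 0 ↔ LinearMap.range f.1 ≤ LinearMap.ker g.1 := by
  constructor
  · rintro h _ ⟨x, rfl⟩
    exact congrArg (fun k => k.1 x) h
  · exact fun h => hom_ext fun x => h ⟨x, rfl⟩

theorem mono_of_injective {f : M ⟶ N} (hf : Function.Injective f.1) : Mono f where
  right_cancellation _ _ h := hom_ext fun x => hf (congrArg (fun k => k.1 x) h)

theorem epi_of_surjective {f : M ⟶ N} (hf : Function.Surjective f.1) : Epi f where
  left_cancellation _ _ h := hom_ext <| hf.forall.2 fun x => congrArg (fun k => k.1 x) h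

theorem exists_comp_eq_of_range_le {f : M ⟶ N} (hf : Function.Injective f.1) {g : P ⟶ N}
    (h : LinearMap.range g.1 ≤ LinearMap.range f.1) : ∃ l : P ⟶ M, l ≫ f = g := by
  let e := LinearEquiv.ofInjective f.1 hf
  let l : P.carrier →ₗ[B] M.carrier :=
    e.symm.toLinearMap ∘ₗ g.1.codRestrict (LinearMap.range f.1) fun x => h ⟨x, rfl⟩
  have hl (x : P.carrier) : f.1 (l x) = g.1 x :=
    congrArg Subtype.val (e.apply_symm_apply ⟨g.1 x, h ⟨x, rfl⟩⟩)
  exact ⟨⟨l, fun n x hx => mem_comp_of_map_mem hf ((hl x).symm ▸ g.2 n x hx)⟩, hom_ext hl⟩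

theorem exists_comp_eq_of_ker_le {f : M ⟶ N} (hf : Function.Surjective f.1) {g : M ⟶ P}
    (h : LinearMap.ker f.1 ≤ LinearMap.ker g.1) : ∃ l : N ⟶ P, f ≫ l = g := by
  let e := f.1.quotKerEquivOfSurjective hf
  let l : N.carrier →ₗ[B] P.carrier := (LinearMap.ker f.1).liftQ g.1 h ∘ₗ e.symm.toLinearMap
  have hl (x : M.carrier) : l (f.1 x) = g.1 x :=
    congrArg ((LinearMap.ker f.1).liftQ g.1 h) (e.symm_apply_apply (Submodule.Quotient.mk x))
  refine ⟨⟨l, fun n y hy => ?_⟩, hom_ext hl⟩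
  obtain ⟨x, hx, rfl⟩ := exists_mem_comp_map_eq hf hy
  exact (hl x).symm ▸ g.2 n x hx

/-- An injective homomorphism onto the kernel of `g` is a kernel of `g`. -/
noncomputable def isLimitKernelFork {f : M ⟶ N} {g : N ⟶ P} (hf : Function.Injective f.1)
    (h : LinearMap.range f.1 = LinearMap.ker g.1) :
    IsLimit (KernelFork.ofι f (comp_eq_zero_iff.2 h.le)) :=
  haveI := mono_of_injective hf
  KernelFork.IsLimit.ofι' f _ fun _ hk =>
    have hl := exists_comp_eq_of_range_le hf (h ▸ comp_eq_zero_iff.1 hk)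
    ⟨hl.choose, hl.choose_spec⟩

/-- A surjective homomorphism killing exactly the range of `f` is a cokernel of `f`. -/
noncomputable def isColimitCokernelCofork {f : M ⟶ N} {g : N ⟶ P}
    (hg : Function.Surjective g.1) (h : LinearMap.range f.1 = LinearMap.ker g.1) :
    IsColimit (CokernelCofork.ofπ g (comp_eq_zero_iff.2 h.le)) :=
  haveI := epi_of_surjective hg
  CokernelCofork.IsColimit.ofπ' g _ fun _ hk =>
    have hl := exists_comp_eq_of_ker_le hg (h ▸ comp_eq_zero_iff.1 hk)
    ⟨hl.choose, hl.choose_spec⟩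

end Hom

section Constructions

variable (M N : SgrObj B SG) (K : Submodule B M.carrier)

variable {M K} in
theorem isHomogeneous_range_subtype (hK : K.IsHomogeneous M.comp) :
    SetLike.IsHomogeneous M.comp K.subtype.toAddMonoidHom.range := by
  rintro n _ ⟨x, rfl⟩
  exact ⟨⟨_, hK n x.2⟩, rfl⟩

/-- A finitely generated homogeneous submodule, as an object of `sgr-B`. -/
def sub [Module.Finite B K] (hK : K.IsHomogeneous M.comp) : SgrObj B SG where
  carrier := K
  comp n := (M.comp n).comap K.subtype.toAddMonoidHom
  internal := isInternal_comap K.subtype_injective (isHomogeneous_range_subtype hK)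
  smul_mem m n b hb v hv :=
    comap_biSup_le_of_isHomogeneous K.subtype_injective (isHomogeneous_range_subtype hK) _
      (M.smul_mem m n b hb v hv)
  fg := inferInstance

/-- The quotient of a semi-graded module by a homogeneous submodule. -/
def quot (hK : K.IsHomogeneous M.comp) : SgrObj B SG where
  carrier := M.carrier ⧸ K
  comp n := (M.comp n).map K.mkQ.toAddMonoidHom
  internal := isInternal_map K.mkQ_surjective <| by
    intro n x hx
    exact (Submodule.Quotient.mk_eq_zero K).2 (hK n ((Submodule.Quotient.mk_eq_zero K).1 hx))
  smul_mem m n b hb := by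
    rintro _ ⟨x, hx, rfl⟩
    have hbx := AddSubgroup.mem_map_of_mem K.mkQ.toAddMonoidHom (M.smul_mem m n b hb x hx)
    simp only [AddSubgroup.map_iSup] at hbx
    exact hbx
  fg := inferInstance

/-- The direct sum of two semi-graded modules. -/
def prod : SgrObj B SG where
  carrier := M.carrier × N.carrier
  comp n := (M.comp n).prod (N.comp n)
  internal := isInternal_prod N.comp
  smul_mem m n b hb v hv :=
    biSup_prod_biSup_le M.comp N.comp _
      ⟨M.smul_mem m n b hb v.1 hv.1, N.smul_mem m n b hb v.2 hv.2⟩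
  fg := inferInstance

/-- The zero semi-graded module. -/
def punit : SgrObj B SG where
  carrier := PUnit
  comp _ := ⊥
  internal := isInternal_of_projections (Subsingleton.elim _ _) (fun _ => AddMonoidHom.id PUnit)
    (fun _ _ _ _ => rfl) fun _ _ _ _ _ => rfl
  smul_mem _ _ _ _ _ _ := zero_mem _
  fg := inferInstance

end Constructions

section Abelian

theorem isZero_punit : IsZero (punit : SgrObj B SG) :=
  (IsZero.iff_id_eq_zero _).2 (hom_ext fun _ => rfl)

instance : HasZeroObject (SgrObj B SG) := ⟨punit, isZero_punit⟩

/-- The biproduct bicone on the direct sum of two semi-graded modules. -/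
def bicone (M N : SgrObj B SG) : BinaryBicone M N where
  pt := M.prod N
  fst := ⟨LinearMap.fst B M.carrier N.carrier, fun _ _ hx => hx.1⟩
  snd := ⟨LinearMap.snd B M.carrier N.carrier, fun _ _ hx => hx.2⟩
  inl := ⟨LinearMap.inl B M.carrier N.carrier, fun _ _ hx => ⟨hx, zero_mem _⟩⟩
  inr := ⟨LinearMap.inr B M.carrier N.carrier, fun _ _ hx => ⟨zero_mem _, hx⟩⟩
  inl_fst := rfl
  inl_snd := rfl
  inr_fst := rfl
  inr_snd := rfl

instance : HasBinaryBiproducts (SgrObj B SG) where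
  has_binary_biproduct M N := ⟨⟨⟨bicone M N, isBinaryBilimitOfTotal _
    (hom_ext fun x => Prod.ext (add_zero x.1) (zero_add x.2))⟩⟩⟩

variable {M N : SgrObj B SG}

/-- The projection of `N` onto the cokernel of `f`, computed on the underlying modules. -/
def cokerπ (f : M ⟶ N) : N ⟶ N.quot (LinearMap.range f.1) (isHomogeneous_range f) :=
  ⟨(LinearMap.range f.1).mkQ, fun _ _ hx => ⟨_, hx, rfl⟩⟩

theorem cokerπ_surjective (f : M ⟶ N) : Function.Surjective (cokerπ f).1 :=
  Submodule.mkQ_surjective _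

theorem ker_cokerπ (f : M ⟶ N) : LinearMap.ker (cokerπ f).1 = LinearMap.range f.1 :=
  Submodule.ker_mkQ _

theorem epi_iff_surjective {f : M ⟶ N} : Epi f ↔ Function.Surjective f.1 := by
  refine ⟨fun _ => ?_, epi_of_surjective⟩
  have hπ : cokerπ f = 0 := zero_of_epi_comp f (comp_eq_zero_iff.2 (ker_cokerπ f).ge)
  rw [← LinearMap.range_eq_top, ← ker_cokerπ f, hπ]
  exact LinearMap.ker_zero

variable [IsNoetherianRing B]

/-- The inclusion of the kernel of `f`, computed on the underlying modules, into `M`. -/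
def kerι (f : M ⟶ N) : M.sub (LinearMap.ker f.1) (isHomogeneous_ker f) ⟶ M :=
  ⟨(LinearMap.ker f.1).subtype, fun _ _ hx => hx⟩

theorem kerι_injective (f : M ⟶ N) : Function.Injective (kerι f).1 :=
  Submodule.subtype_injective _

theorem range_kerι (f : M ⟶ N) : LinearMap.range (kerι f).1 = LinearMap.ker f.1 :=
  Submodule.range_subtype _

theorem mono_iff_injective {f : M ⟶ N} : Mono f ↔ Function.Injective f.1 := by
  refine ⟨fun _ => ?_, mono_of_injective⟩
  have hι : kerι f = 0 := zero_of_comp_mono f (comp_eq_zero_iff.2 (range_kerι f).le)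
  rw [← LinearMap.ker_eq_bot, ← range_kerι f, hι]
  exact LinearMap.range_zero

noncomputable instance : Abelian (SgrObj B SG) where
  normalMonoOfMono f _ :=
    ⟨⟨_, cokerπ f, _, isLimitKernelFork (mono_iff_injective.1 ‹_›) (ker_cokerπ f).symm⟩⟩
  normalEpiOfEpi f _ :=
    ⟨⟨_, kerι f, _, isColimitCokernelCofork (epi_iff_surjective.1 ‹_›) (range_kerι f)⟩⟩
  has_finite_products := hasFiniteProducts_of_has_binary_and_terminal
  has_kernels := ⟨fun f => ⟨⟨_, isLimitKernelFork (kerι_injective f) (range_kerι f)⟩⟩⟩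
  has_cokernels :=
    ⟨fun f => ⟨⟨_, isColimitCokernelCofork (cokerπ_surjective f) (ker_cokerπ f).symm⟩⟩⟩

theorem range_eq_ker_of_exact {S : ShortComplex (SgrObj B SG)} (hS : S.Exact) :
    LinearMap.range S.f.1 = LinearMap.ker S.g.1 := by
  refine (comp_eq_zero_iff.1 S.zero).antisymm fun x hx => ?_
  obtain ⟨A, π, _, y, hy⟩ := hS.exact_up_to_refinements (kerι S.g)
    (comp_eq_zero_iff.2 (range_kerι S.g).le)
  obtain ⟨a, ha⟩ := epi_iff_surjective.1 ‹Epi π› ⟨x, hx⟩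
  have hya : (kerι S.g).1 (π.1 a) = S.f.1 (y.1 a) := congrArg (fun k => k.1 a) hy
  exact ⟨y.1 a, hya.symm.trans (congrArg (kerι S.g).1 ha)⟩

end Abelian

section Serre

theorem isTorsion_iff_of_exact {M' M M'' : SgrObj B SG} {f : M' ⟶ M} {g : M ⟶ M''}
    (hf : Function.Injective f.1) (hg : Function.Surjective g.1)
    (hfg : LinearMap.range f.1 = LinearMap.ker g.1) :
    M.IsTorsion ↔ M'.IsTorsion ∧ M''.IsTorsion := by
  simp only [isTorsion_iff]
  exact saturation_bot_eq_top_iff_of_exact SemiGraded.Bge_antitone hf hg hfg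

theorem isTorsion_iff_of_injective {M N : SgrObj B SG} {f : M ⟶ N}
    (hf : Function.Injective f.1) :
    M.IsTorsion ↔ LinearMap.range f.1 ≤ SG.torsion N.carrier :=
  isTorsion_iff.trans (saturation_bot_eq_top_iff_of_injective SemiGraded.Bge_antitone hf)

theorem isTorsion_iff_of_surjective {M N : SgrObj B SG} {f : M ⟶ N}
    (hf : Function.Surjective f.1) :
    N.IsTorsion ↔ saturation (SG.Bge B) (LinearMap.ker f.1) = ⊤ :=
  isTorsion_iff.trans (saturation_bot_eq_top_iff_of_surjective SemiGraded.Bge_antitone hf)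

variable (B SG) in
/-- The full subcategory `stor-B` of torsion modules. -/
def stor : ObjectProperty (SgrObj B SG) := fun M => M.IsTorsion

variable [IsNoetherianRing B]

instance : (stor B SG).IsSerreClass where
  exists_zero := ⟨punit, isZero_punit,
    isTorsion_iff.2 (Subsingleton.elim (α := Submodule B PUnit) _ _)⟩
  prop_of_mono f _ h := (isTorsion_iff_of_injective (mono_iff_injective.1 ‹_›)).2
    (isTorsion_iff.1 h ▸ le_top)
  prop_of_epi f _ h := (isTorsion_iff_of_surjective (epi_iff_surjective.1 ‹_›)).2
    (top_le_iff.1 ((isTorsion_iff.1 h).ge.trans (saturation_mono _ bot_le)))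
  prop_X₂_of_shortExact hS h₁ h₃ :=
    (isTorsion_iff_of_exact (mono_iff_injective.1 hS.mono_f) (epi_iff_surjective.1 hS.epi_g)
      (range_eq_ker_of_exact hS.exact)).2 ⟨h₁, h₃⟩

theorem torsionW_eq_isoModSerre : torsionW B SG = (stor B SG).isoModSerre := by
  ext M N f
  have hker : LinearMap.range (kernel.ι f).1 = LinearMap.ker f.1 :=
    range_eq_ker_of_exact (ShortComplex.exact_kernel f)
  have hcoker : LinearMap.range f.1 = LinearMap.ker (cokernel.π f).1 :=
    range_eq_ker_of_exact (ShortComplex.exact_cokernel f)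
  rw [torsionW_iff, hcoker, ← hker,
    ← isTorsion_iff_of_injective (mono_iff_injective.1 inferInstance),
    ← isTorsion_iff_of_surjective (epi_iff_surjective.1 inferInstance)]
  rfl

end Serre

end SgrObj

theorem stor_serre_and_qsgr_abelian_general [IsNoetherianRing B] :
    (∀ (M' M M'' : SgrObj B SG) (ι : M' ⟶ M) (j : M ⟶ M''),
      Function.Injective ι.1 → Function.Surjective j.1 →
      LinearMap.range ι.1 = LinearMap.ker j.1 →
      (M.IsTorsion ↔ M'.IsTorsion ∧ M''.IsTorsion)) ∧
    Nonempty (Abelian (torsionW B SG).Localization) := by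
  refine ⟨fun _ _ _ _ _ => SgrObj.isTorsion_iff_of_exact, ?_⟩
  rw [SgrObj.torsionW_eq_isoModSerre]
  exact ⟨ObjectProperty.SerreClassLocalization.abelian
    (SgrObj.stor B SG).isoModSerre.Q (SgrObj.stor B SG)⟩

/-- Let `B` satisfy (C1)–(C4).  Then the torsion modules form a Serre subcategory of
`sgr-B`: for every short exact sequence `0 → M' → M → M'' → 0` in `sgr-B`, `M` is torsion
iff both `M'` and `M''` are torsion.  Consequently the quotient category
`qsgr-B := sgr-B/stor-B` is abelian. -/
theorem stor_serre_and_qsgr_abelian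
    -- (C1) `B` is left noetherian (and semi-graded, via `SG`)
    (hC1 : IsNoetherianRing B)
    -- (C2) `B_0` is left noetherian
    (hC2 : ∀ c : ℕ →o AddSubgroup B,
      (∀ m, c m ≤ SG.comp 0 ∧ ∀ b ∈ SG.comp 0, ∀ w ∈ c m, b * w ∈ c m) →
      ∃ N, ∀ m, N ≤ m → c m = c N)
    -- (C3) each `B_n` is a finitely generated left `B_0`-module
    (hC3 : ∀ n : ℕ, ∃ (k : ℕ) (v : Fin k → B), (∀ i, v i ∈ SG.comp n) ∧
      ∀ b ∈ SG.comp n, ∃ c : Fin k → B, (∀ i, c i ∈ SG.comp 0) ∧ b = ∑ i, c i * v i)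
    -- (C4) `B_0 ⊆ Z(B)`
    (hC4 : (SG.comp 0 : Set B) ⊆ Set.center B) :
    (∀ (M' M M'' : SgrObj B SG) (ι : M' ⟶ M) (j : M ⟶ M''),
      Function.Injective ι.1 → Function.Surjective j.1 →
      LinearMap.range ι.1 = LinearMap.ker j.1 →
      (M.IsTorsion ↔ M'.IsTorsion ∧ M''.IsTorsion)) ∧
    Nonempty (Abelian (torsionW B SG).Localization) := by
  exact stor_serre_and_qsgr_abelian_general B SG
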